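/- arXiv:2210.11523 — 2 statements merged into one kernel-verified Lean document; each statement's English description precedes it below -/
import Mathlib

section
/- Let N ≥ 1, let H be an N×N complex Hermitian matrix all of whose eigenvalues lie in {λ₁, λ₂} for real numbers λ₁, λ₂, let ψ ∈ ℂ^N, let M be an N×N complex matrix, and define f(θ) = ⟨ψ, exp(iθH)† · M · exp(iθH) ψ⟩. Then for every α ∈ ℝ with sin((λ₁−λ₂)α) ≠ 0, f is differentiable at every θ ∈ ℝ and f′(θ) = ((λ₁−λ₂)/(2·sin((λ₁−λ₂)α))) · (f(θ+α) − f(θ−α)). -/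
open Matrix Complex

/-!
If `(a - l₁) (a - l₂) = 0`, then left multiplication by `a` acts on `a - l₂` as the scalar `l₁` and
on `a - l₁` as the scalar `l₂`; exponentiating and subtracting gives Sylvester's formula
`(l₁ - l₂) exp (z a) = exp (z l₁) (a - l₂) - exp (z l₂) (a - l₁)`. Inserting it into the conjugation
flow `F z = exp (-z a) x exp (z a)`, every term of `F w - F (-w)` cancels except a multiple of the
commutator: `(l₁ - l₂) (F w - F (-w)) = 2 sinh ((l₁ - l₂) w) (x a - a x)`. Since `x a - a x` is the
derivative of `F` at `0`, transporting this identity along the flow gives the shift rule at every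
point. The quantum case is the imaginary time `z = iθ`, where `sinh` becomes `sin`.
-/

section Sylvester

lemma pow_mul_eq_smul_of_mul_eq_smul {R A : Type*} [Monoid R] [Monoid A] [MulAction R A]
    [SMulCommClass R A A] {a b : A} {l : R} (h : a * b = l • b) (n : ℕ) :
    a ^ n * b = l ^ n • b := by
  induction n with
  | zero => simp
  | succ n ih => rw [pow_succ, mul_assoc, h, mul_smul_comm, ih, smul_smul, pow_succ']

variable {𝕜 A : Type*} [RCLike 𝕜] [NormedRing A] [NormedAlgebra 𝕜 A] [CompleteSpace A]

lemma exp_mul_eq_smul_of_mul_eq_smul {a b : A} {l : 𝕜} (h : a * b = l • b) :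
    NormedSpace.exp a * b = NormedSpace.exp l • b := by
  have h_left := (NormedSpace.exp_series_hasSum_exp' (𝕂 := 𝕜) a).mul_right b
  have h_right := (NormedSpace.exp_series_hasSum_exp' (𝕂 := 𝕜) l).smul_const b
  refine h_left.unique (h_right.congr_fun fun n ↦ ?_)
  rw [smul_mul_assoc, pow_mul_eq_smul_of_mul_eq_smul h, smul_assoc]

lemma sub_smul_exp_smul_of_mul_eq_zero {a : A} {l₁ l₂ : 𝕜}
    (ha : (a - algebraMap 𝕜 A l₁) * (a - algebraMap 𝕜 A l₂) = 0) (z : 𝕜) :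
    (l₁ - l₂) • NormedSpace.exp (z • a) =
      NormedSpace.exp (z * l₁) • (a - algebraMap 𝕜 A l₂) -
        NormedSpace.exp (z * l₂) • (a - algebraMap 𝕜 A l₁) := by
  have h_eigen {l m : 𝕜} (h : (a - algebraMap 𝕜 A l) * (a - algebraMap 𝕜 A m) = 0) :
      NormedSpace.exp (z • a) * (a - algebraMap 𝕜 A m) =
        NormedSpace.exp (z * l) • (a - algebraMap 𝕜 A m) := by
    rw [sub_mul, sub_eq_zero, ← Algebra.smul_def] at h
    exact exp_mul_eq_smul_of_mul_eq_smul (by rw [smul_mul_assoc, h, smul_smul])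
  have h_commute : Commute (a - algebraMap 𝕜 A l₁) (a - algebraMap 𝕜 A l₂) :=
    ((Commute.refl a).sub_left (Algebra.commute_algebraMap_left l₁ a)).sub_right
      (Algebra.commute_algebraMap_right l₂ _)
  rw [← h_eigen ha, ← h_eigen (h_commute.eq.symm.trans ha), ← mul_sub, sub_sub_sub_cancel_left,
    ← map_sub, ← Algebra.commutes, ← Algebra.smul_def]

end Sylvester

/-- The conjugation flow `z ↦ exp (-z a) x exp (z a)` generated by `a`. For self-adjoint `a` and
imaginary `z` it is the Heisenberg-picture evolution of the observable `x`. -/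
noncomputable def expConj {𝕜 A : Type*} [RCLike 𝕜] [NormedRing A] [NormedAlgebra 𝕜 A]
    (a x : A) (z : 𝕜) : A :=
  NormedSpace.exp (-(z • a)) * x * NormedSpace.exp (z • a)

section Flow

variable {𝕜 A : Type*} [RCLike 𝕜] [NormedRing A] [NormedAlgebra 𝕜 A]

lemma expConj_sub (a x y : A) (z : 𝕜) :
    expConj a (x - y) z = expConj a x z - expConj a y z := by
  simp only [expConj, mul_sub, sub_mul]

lemma expConj_smul (c : 𝕜) (a x : A) (z : 𝕜) : expConj a (c • x) z = c • expConj a x z := by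
  simp only [expConj, mul_smul_comm, smul_mul_assoc]

variable [CompleteSpace A]

lemma exp_add_smul (a : A) (z w : 𝕜) :
    NormedSpace.exp ((z + w) • a) = NormedSpace.exp (z • a) * NormedSpace.exp (w • a) := by
  let := NormedAlgebra.restrictScalars ℚ 𝕜 A
  rw [add_smul, NormedSpace.exp_add_of_commute (((Commute.refl a).smul_left z).smul_right w)]

lemma expConj_add (a x : A) (z w : 𝕜) :
    expConj a x (z + w) = expConj a (expConj a x w) z := by
  have h_neg : -((z + w) • a) = (-z + -w) • a := by module
  rw [expConj, h_neg, add_comm z w, exp_add_smul, exp_add_smul, neg_smul, neg_smul]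
  simp only [expConj, mul_assoc]

lemma hasDerivAt_expConj (a x : A) (z : 𝕜) :
    HasDerivAt (expConj a x) (expConj a (x * a - a * x) z) z := by
  have h_left : HasDerivAt (fun w : 𝕜 ↦ NormedSpace.exp (-(w • a)))
      (-(NormedSpace.exp (-(z • a)) * a)) z := by
    simpa only [smul_neg, mul_neg] using hasDerivAt_exp_smul_const (-a) z
  have h_right := hasDerivAt_exp_smul_const' a z
  convert! (h_left.mul_const x).mul h_right using 1
  simp only [expConj]
  noncomm_ring

end Flow

section Shift

lemma smul_sub_smul_mul_mul_sub_comm {R A : Type*} [CommRing R] [Ring A] [Algebra R A]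
    (r s t u : R) (p q x : A) :
    (r • p - s • q) * x * (t • p - u • q) - (t • p - u • q) * x * (r • p - s • q) =
      (s * t - r * u) • (p * x * q - q * x * p) := by
  simp only [sub_mul, mul_sub, smul_mul_assoc, mul_smul_comm]
  module

lemma sub_algebraMap_mul_mul_sub_comm {R A : Type*} [CommRing R] [Ring A] [Algebra R A]
    (a x : A) (r s : R) :
    (a - algebraMap R A s) * x * (a - algebraMap R A r) -
      (a - algebraMap R A r) * x * (a - algebraMap R A s) = (r - s) • (x * a - a * x) := by
  simp only [Algebra.algebraMap_eq_smul_one, sub_mul, mul_sub, smul_mul_assoc, mul_smul_comm,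
    one_mul, mul_one]
  module

variable {A : Type*} [NormedRing A] [NormedAlgebra ℂ A] [CompleteSpace A] {a : A} {l₁ l₂ : ℂ}

lemma sub_smul_expConj_sub_expConj_neg
    (ha : (a - algebraMap ℂ A l₁) * (a - algebraMap ℂ A l₂) = 0) (x : A) (z : ℂ) :
    (l₁ - l₂) • (expConj a x z - expConj a x (-z)) =
      (2 * sinh ((l₁ - l₂) * z)) • (x * a - a * x) := by
  rcases eq_or_ne l₁ l₂ with rfl | h_ne
  · simp
  have h_sinh : cexp (-z * l₂) * cexp (z * l₁) - cexp (-z * l₁) * cexp (z * l₂) =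
      2 * sinh ((l₁ - l₂) * z) := by
    rw [two_sinh, ← Complex.exp_add, ← Complex.exp_add]
    ring_nf
  refine smul_right_injective A (sub_ne_zero.2 h_ne) ?_
  calc (l₁ - l₂) • (l₁ - l₂) • (expConj a x z - expConj a x (-z))
    _ = ((l₁ - l₂) • NormedSpace.exp (-z • a)) * x * ((l₁ - l₂) • NormedSpace.exp (z • a)) -
        ((l₁ - l₂) • NormedSpace.exp (z • a)) * x * ((l₁ - l₂) • NormedSpace.exp (-z • a)) := by
      simp only [expConj, smul_mul_assoc, mul_smul_comm, smul_sub, neg_smul, neg_neg]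
    _ = (2 * sinh ((l₁ - l₂) * z)) • (l₁ - l₂) • (x * a - a * x) := by
      rw [sub_smul_exp_smul_of_mul_eq_zero ha, sub_smul_exp_smul_of_mul_eq_zero ha,
        smul_sub_smul_mul_mul_sub_comm, sub_algebraMap_mul_mul_sub_comm, ← Complex.exp_eq_exp_ℂ,
        h_sinh]
    _ = (l₁ - l₂) • (2 * sinh ((l₁ - l₂) * z)) • (x * a - a * x) := smul_comm _ _ _

theorem hasDerivAt_expConj_of_mul_eq_zero
    (ha : (a - algebraMap ℂ A l₁) * (a - algebraMap ℂ A l₂) = 0) (x : A) {w : ℂ}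
    (hw : sinh ((l₁ - l₂) * w) ≠ 0) (z : ℂ) :
    HasDerivAt (expConj a x)
      (((l₁ - l₂) / (2 * sinh ((l₁ - l₂) * w))) • (expConj a x (z + w) - expConj a x (z - w)))
      z := by
  have h_commutator : x * a - a * x =
      ((l₁ - l₂) / (2 * sinh ((l₁ - l₂) * w))) • (expConj a x w - expConj a x (-w)) := by
    rw [div_eq_inv_mul, mul_smul, sub_smul_expConj_sub_expConj_neg ha,
      inv_smul_smul₀ (mul_ne_zero two_ne_zero hw)]
  rw [sub_eq_add_neg z, expConj_add, expConj_add, ← expConj_sub, ← expConj_smul, ← h_commutator]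
  exact hasDerivAt_expConj a x z

end Shift

section SelfAdjoint

open Polynomial in
lemma aeval_eq_zero_of_forall_mem_spectrum_isRoot {R A : Type*} {p : A → Prop} [CommSemiring R]
    [StarRing R] [MetricSpace R] [IsTopologicalSemiring R] [ContinuousStar R] [TopologicalSpace A]
    [Ring A] [StarRing A] [Algebra R A] [ContinuousFunctionalCalculus R A p] {a : A} (ha : p a)
    {q : R[X]} (hq : ∀ l ∈ spectrum R a, q.IsRoot l) : aeval a q = 0 := by
  rw [← cfc_polynomial q a ha, cfc_congr (g := fun _ ↦ 0) hq, cfc_const_zero]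

variable {A : Type*} [CStarAlgebra A] {a : A}

open Polynomial in
lemma sub_mul_sub_eq_zero_of_spectrum_subset_pair (ha : IsSelfAdjoint a) {l₁ l₂ : ℝ}
    (h_spec : spectrum ℝ a ⊆ {l₁, l₂}) :
    (a - algebraMap ℂ A l₁) * (a - algebraMap ℂ A l₂) = 0 := by
  have h_root (l : ℝ) (hl : l ∈ spectrum ℝ a) : ((X - C l₁) * (X - C l₂)).IsRoot l := by
    simpa [sub_eq_zero] using h_spec hl
  simpa [IsScalarTower.algebraMap_apply ℝ ℂ A] using
    aeval_eq_zero_of_forall_mem_spectrum_isRoot ha h_root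

lemma star_exp_mul_mul_exp_eq_expConj (ha : IsSelfAdjoint a) (x : A) (t : ℝ) :
    star (NormedSpace.exp (((t : ℂ) * I) • a)) * x * NormedSpace.exp (((t : ℂ) * I) • a) =
      expConj a x ((t : ℂ) * I) := by
  rw [expConj, NormedSpace.star_exp]
  simp [ha.star_eq]

theorem two_term_parameter_shift_rule_general {F : Type*} [NormedAddCommGroup F] [NormedSpace ℂ F]
    (ha : IsSelfAdjoint a) {l₁ l₂ : ℝ} (h_spec : spectrum ℝ a ⊆ {l₁, l₂}) (x : A) (φ : A →L[ℂ] F)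
    {f : ℝ → F}
    (hf : ∀ θ : ℝ, f θ = φ (star (NormedSpace.exp (((θ : ℂ) * I) • a)) * x *
      NormedSpace.exp (((θ : ℂ) * I) • a)))
    {α : ℝ} (hα : Real.sin ((l₁ - l₂) * α) ≠ 0) (θ : ℝ) :
    HasDerivAt f
      ((((l₁ - l₂) / (2 * Real.sin ((l₁ - l₂) * α)) : ℝ) : ℂ) • (f (θ + α) - f (θ - α))) θ := by
  have h_flow : f = fun t : ℝ ↦ φ (expConj a x ((t : ℂ) * I)) := by
    funext t
    rw [hf, star_exp_mul_mul_exp_eq_expConj ha]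
  have h_sinh : sinh ((l₁ - l₂) * (α * I)) = Real.sin ((l₁ - l₂) * α) * I := by
    rw [← mul_assoc, sinh_mul_I]
    push_cast
    rfl
  have h_sinh_ne : sinh ((l₁ - l₂) * (α * I)) ≠ 0 :=
    h_sinh ▸ mul_ne_zero (ofReal_ne_zero.2 hα) I_ne_zero
  have h_shift := hasDerivAt_expConj_of_mul_eq_zero
    (sub_mul_sub_eq_zero_of_spectrum_subset_pair ha h_spec) x h_sinh_ne (θ * I)
  have h_time : HasDerivAt (fun t : ℝ ↦ (t : ℂ) * I) I θ := by
    simpa using (hasDerivAt_id θ).ofReal_comp.mul_const I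
  rw [h_flow]
  convert! (φ.restrictScalars ℝ).hasFDerivAt.comp_hasDerivAt θ (h_shift.scomp θ h_time) using 1
  rw [h_sinh, smul_smul]
  simp only [ofReal_add, ofReal_sub, add_mul, sub_mul, ContinuousLinearMap.coe_restrictScalars',
    map_smul, map_sub]
  congr 1
  push_cast
  field_simp

end SelfAdjoint

/-- The two-term parameter-shift rule of Schuld et al. in its most general form:
for a Hermitian generator `H` whose eigenvalues all lie in `{λ₁, λ₂}`, the
expectation value `f θ = ⟨ψ, exp(iθH)† M exp(iθH) ψ⟩` satisfies
`f′(θ) = (λ₁−λ₂)/(2 sin((λ₁−λ₂)α)) · (f(θ+α) − f(θ−α))`. -/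
theorem two_term_parameter_shift_rule (N : ℕ) (hN : 1 ≤ N)
    (H : Matrix (Fin N) (Fin N) ℂ) (hH : H.IsHermitian) (l₁ l₂ : ℝ)
    (heig : ∀ i, hH.eigenvalues i ∈ ({l₁, l₂} : Set ℝ))
    (ψ : Fin N → ℂ) (M : Matrix (Fin N) (Fin N) ℂ) (f : ℝ → ℂ)
    (hf : ∀ θ : ℝ, f θ =
      star ψ ⬝ᵥ (((NormedSpace.exp (((θ : ℂ) * I) • H))ᴴ * M *
        NormedSpace.exp (((θ : ℂ) * I) • H)) *ᵥ ψ))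
    (α : ℝ) (hα : Real.sin ((l₁ - l₂) * α) ≠ 0) (θ : ℝ) :
    HasDerivAt f
      ((((l₁ - l₂) / (2 * Real.sin ((l₁ - l₂) * α)) : ℝ) : ℂ) * (f (θ + α) - f (θ - α))) θ := by
  open scoped Matrix.Norms.L2Operator in
  let expectation : Matrix (Fin N) (Fin N) ℂ →L[ℂ] ℂ :=
    (dotProductBilin ℂ ℂ (star ψ) ∘ₗ (mulVecBilin ℂ ℂ).flip ψ).toContinuousLinearMap
  exact two_term_parameter_shift_rule_general hH.isSelfAdjoint
    (hH.spectrum_real_eq_range_eigenvalues ▸ Set.range_subset_iff.2 heig) M expectation hf hα θ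
end

section
/- Let N ≥ 1, let λ ≠ 0 be real, and let H be an N×N complex Hermitian matrix such that −λ, 0 and λ are all eigenvalues of H. Then there do not exist real numbers ξ₁, ξ₂, ξ₃ and real shifts s₁, s₂, s₃ such that for every vector ψ ∈ ℂ^N and every N×N complex Hermitian matrix M, the function f(θ) = ⟨ψ, exp(iθH)† · M · exp(iθH) ψ⟩ is differentiable with f′(θ) = ξ₁·f(θ+s₁) + ξ₂·f(θ+s₂) + ξ₃·f(θ+s₃) for all θ ∈ ℝ. In particular, the four-term shift rule for generators with eigenvalues −λ, 0, λ is optimal. -/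
open Matrix Complex

/-- The expectation value of the observable `M` in the state `exp(iθH) ψ`. -/
noncomputable def expectationValue (N : ℕ) (H M : Matrix (Fin N) (Fin N) ℂ)
    (ψ : Fin N → ℂ) (θ : ℝ) : ℂ :=
  star ψ ⬝ᵥ (((NormedSpace.exp (((θ : ℂ) * I) • H))ᴴ * M *
    NormedSpace.exp (((θ : ℂ) * I) • H)) *ᵥ ψ)

/-!
For a Hermitian `H` and eigenvectors `H a = α a`, `H b = β b`, the rank-one observable `a b†` has
expectation value proportional to `exp (i (β - α) θ)`. A shift rule, which extends from Hermitian
to arbitrary observables by complex linearity, therefore satisfies `∑ j, ξ j exp (i ω s j) = i ω`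
for every difference `ω` of two eigenvalues.

If all `m λ` with `|m| ≤ R` are such differences, put `z j = exp (i λ s j)` and
`w j = ξ j exp (-i R λ s j)`: the functional `p ↦ ∑ j, w j * p (z j)` on polynomials of degree at
most `2 R` is then `p ↦ i λ (p' 1 - R p 1)`. With fewer than `2 R` nodes it kills
`p = (X - 1) ∏ (X - z)`, the product running over the distinct nodes `z ≠ 1`, yet `p 1 = 0` and
`p' 1 ≠ 0`, a contradiction.
-/

section Moments

open Polynomial

variable {ι K : Type*} [Fintype ι]

theorem sum_mul_eval_eq_of_sum_mul_pow_eq [CommRing K] {w z : ι → K} {a c : K} {d : ℕ}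
    (h : ∀ n ≤ d, ∑ j, w j * z j ^ n = c * (n - a)) {p : K[X]} (hp : p.natDegree ≤ d) :
    ∑ j, w j * p.eval (z j) = c * (p.derivative.eval 1 - a * p.eval 1) := by
  have hderiv : p.derivative.eval 1 = ∑ n ∈ Finset.range (d + 1), p.coeff n * n := by
    rw [derivative_eval, p.sum_over_range' (by simp) (d + 1) (Nat.lt_succ_of_le hp)]
    simp
  calc ∑ j, w j * p.eval (z j)
      = ∑ n ∈ Finset.range (d + 1), p.coeff n * ∑ j, w j * z j ^ n := by
        simp only [eval_eq_sum_range' (Nat.lt_succ_of_le hp), Finset.mul_sum]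
        rw [Finset.sum_comm]
        simp only [mul_left_comm]
    _ = ∑ n ∈ Finset.range (d + 1), p.coeff n * (c * (n - a)) :=
        Finset.sum_congr rfl fun n hn => by rw [h n (Finset.mem_range_succ_iff.mp hn)]
    _ = c * (p.derivative.eval 1 - a * p.eval 1) := by
        rw [hderiv, eval_eq_sum_range' (Nat.lt_succ_of_le hp), Finset.mul_sum,
          ← Finset.sum_sub_distrib, Finset.mul_sum]
        exact Finset.sum_congr rfl fun n _ => by ring

theorem exists_eval_eq_zero_and_derivative_eval_one_ne_zero [CommRing K] [IsDomain K] (z : ι → K) :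
    ∃ p : K[X], p.natDegree ≤ Fintype.card ι + 1 ∧ (∀ j, p.eval (z j) = 0) ∧
      p.eval 1 = 0 ∧ p.derivative.eval 1 ≠ 0 := by
  classical
  set s := (Finset.univ.image z).erase 1
  set q : K[X] := ∏ x ∈ s, (X - C x)
  have hcard : s.card ≤ Fintype.card ι := Finset.card_erase_le.trans Finset.card_image_le
  refine ⟨(X - C 1) * q, ?_, fun j => ?_, by simp, ?_⟩
  · rw [(monic_X_sub_C 1).natDegree_mul (monic_prod_X_sub_C _ s), natDegree_X_sub_C,
      natDegree_finsetProd_X_sub_C_eq_card]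
    lia
  · by_cases hj : z j = 1
    · simp [hj]
    · have hmem : z j ∈ s := by simp [s, hj]
      simp [q, eval_prod, Finset.prod_eq_zero hmem]
  · have hq : q.eval 1 ≠ 0 := by
      rw [eval_prod, Finset.prod_ne_zero_iff]
      intro x hx
      simpa [sub_eq_zero] using (Finset.ne_of_mem_erase hx).symm
    simpa [derivative_mul] using hq

theorem eq_zero_of_sum_mul_pow_eq [CommRing K] [IsDomain K] {w z : ι → K} {a c : K}
    (h : ∀ n ≤ Fintype.card ι + 1, ∑ j, w j * z j ^ n = c * (n - a)) : c = 0 := by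
  obtain ⟨p, hdeg, hz, hone, hderiv⟩ := exists_eval_eq_zero_and_derivative_eval_one_ne_zero z
  have hsum := sum_mul_eval_eq_of_sum_mul_pow_eq h hdeg
  simpa [hz, hone, hderiv] using hsum.symm

end Moments

section Eigenvectors

variable {n : Type*} [Fintype n]

theorem exp_mulVec_of_mulVec_eq_smul {𝕜 : Type*} [RCLike 𝕜] [DecidableEq n] {A : Matrix n n 𝕜}
    {v : n → 𝕜} {μ : 𝕜} (h : A *ᵥ v = μ • v) :
    NormedSpace.exp A *ᵥ v = NormedSpace.exp μ • v := by
  have hpow (k : ℕ) : A ^ k *ᵥ v = μ ^ k • v := by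
    induction k with
    | zero => simp
    | succ k ih => rw [pow_succ, ← mulVec_mulVec, h, mulVec_smul, ih, smul_smul, pow_succ']
  have hA : HasSum (fun k : ℕ => (k.factorial⁻¹ : 𝕜) • A ^ k) (NormedSpace.exp A) :=
    open scoped Norms.Operator in NormedSpace.exp_series_hasSum_exp' A
  have hAv := hA.map ((mulVecBilin 𝕜 𝕜).flip v) (continuous_id.matrix_mulVec continuous_const)
  have hμ := (NormedSpace.exp_series_hasSum_exp' (𝕂 := 𝕜) μ).smul_const v
  refine hAv.unique (hμ.congr_fun fun k => ?_)
  simp [hpow, smul_smul]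

theorem exists_star_dotProduct_ne_zero {R : Type*} [NonUnitalRing R] [PartialOrder R] [StarRing R]
    [StarOrderedRing R] [NoZeroDivisors R] {a b : n → R} (ha : a ≠ 0) (hb : b ≠ 0) :
    ∃ v : n → R, star v ⬝ᵥ a ≠ 0 ∧ star b ⬝ᵥ v ≠ 0 := by
  have haa : star a ⬝ᵥ a ≠ 0 := dotProduct_star_self_eq_zero.not.mpr ha
  have hbb : star b ⬝ᵥ b ≠ 0 := dotProduct_star_self_eq_zero.not.mpr hb
  by_cases hba : star b ⬝ᵥ a = 0
  · exact ⟨a + b, by simpa [add_dotProduct, hba] using haa, by simpa [hba] using hbb⟩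
  · exact ⟨a, haa, hba⟩

theorem conjTranspose_exp_mulVec_of_mulVec_eq_smul [DecidableEq n] {H : Matrix n n ℂ}
    (hH : H.IsHermitian) {v : n → ℂ} {μ : ℝ} (h : H *ᵥ v = (μ : ℂ) • v) (θ : ℝ) :
    (NormedSpace.exp (((θ : ℂ) * I) • H))ᴴ *ᵥ v = cexp (-(θ * I * μ)) • v := by
  rw [← exp_conjTranspose, Complex.exp_eq_exp_ℂ]
  refine exp_mulVec_of_mulVec_eq_smul ?_
  rw [conjTranspose_smul, hH.eq, smul_mulVec, h, smul_smul]
  simp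

end Eigenvectors

section ShiftRules

variable {N : ℕ} {H : Matrix (Fin N) (Fin N) ℂ}

theorem expectationValue_add (A B : Matrix (Fin N) (Fin N) ℂ) (ψ : Fin N → ℂ) :
    expectationValue N H (A + B) ψ = expectationValue N H A ψ + expectationValue N H B ψ := by
  ext θ
  simp [expectationValue, Matrix.mul_add, Matrix.add_mul, add_mulVec]

theorem expectationValue_smul (c : ℂ) (A : Matrix (Fin N) (Fin N) ℂ) (ψ : Fin N → ℂ) :
    expectationValue N H (c • A) ψ = c • expectationValue N H A ψ := by
  ext θ
  simp [expectationValue, smul_mulVec]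

theorem expectationValue_vecMulVec_star (hH : H.IsHermitian) {a b : Fin N → ℂ} {α β : ℝ}
    (ha : H *ᵥ a = (α : ℂ) • a) (hb : H *ᵥ b = (β : ℂ) • b) (ψ : Fin N → ℂ) (θ : ℝ) :
    expectationValue N H (vecMulVec a (star b)) ψ θ =
      (star ψ ⬝ᵥ a) * (star b ⬝ᵥ ψ) * cexp (I * (β - α : ℝ) * θ) := by
  have hleft := conjTranspose_exp_mulVec_of_mulVec_eq_smul hH ha θ
  have hright : star b ᵥ* NormedSpace.exp (((θ : ℂ) * I) • H) = cexp (θ * I * β) • star b := by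
    have hstar := congrArg star (conjTranspose_exp_mulVec_of_mulVec_eq_smul hH hb θ)
    rw [star_mulVec, conjTranspose_conjTranspose, star_smul, star_def, ← exp_conj] at hstar
    simpa using hstar
  have hexp : cexp (I * (β - α : ℝ) * θ) = cexp (-(θ * I * α)) * cexp (θ * I * β) := by
    rw [← Complex.exp_add]
    push_cast
    ring_nf
  rw [expectationValue, mul_vecMulVec, vecMulVec_mul, hleft, hright, vecMulVec_mulVec, hexp]
  simp only [smul_dotProduct, dotProduct_smul, smul_eq_mul, op_smul_eq_smul]
  ring

/-- `ω` is a *frequency* of `H`: the difference of two real eigenvalues. For Hermitian `H` these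
are the frequencies of the trigonometric sums `expectationValue N H M ψ`. -/
def IsFrequency (H : Matrix (Fin N) (Fin N) ℂ) (ω : ℝ) : Prop :=
  ∃ (α β : ℝ) (a b : Fin N → ℂ), a ≠ 0 ∧ b ≠ 0 ∧
    H *ᵥ a = (α : ℂ) • a ∧ H *ᵥ b = (β : ℂ) • b ∧ β - α = ω

theorem IsFrequency.neg {ω : ℝ} (h : IsFrequency H ω) : IsFrequency H (-ω) := by
  obtain ⟨α, β, a, b, ha, hb, hα, hβ, rfl⟩ := h
  exact ⟨β, α, b, a, hb, ha, hβ, hα, by ring⟩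

theorem isFrequency_natCast_mul_of_eigenvectors {lam : ℝ}
    (hneg : ∃ u : Fin N → ℂ, u ≠ 0 ∧ H *ᵥ u = (-(lam : ℂ)) • u)
    (hzero : ∃ v : Fin N → ℂ, v ≠ 0 ∧ H *ᵥ v = (0 : ℂ) • v)
    (hpos : ∃ w : Fin N → ℂ, w ≠ 0 ∧ H *ᵥ w = (lam : ℂ) • w) (m : ℕ) (hm : m ≤ 2) :
    IsFrequency H (m * lam) := by
  obtain ⟨u, hu, hHu⟩ := hneg
  obtain ⟨v, hv, hHv⟩ := hzero
  obtain ⟨w, hw, hHw⟩ := hpos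
  interval_cases m
  · exact ⟨0, 0, v, v, hv, hv, by simpa using hHv, by simpa using hHv, by simp⟩
  · exact ⟨0, lam, v, w, hv, hw, by simpa using hHv, hHw, by simp⟩
  · exact ⟨-lam, lam, u, w, hu, hw, by simpa using hHu, hHw, by push_cast; ring⟩

variable {ι : Type*} [Fintype ι] {ξ : ι → ℂ} {s : ι → ℝ}

/-- The coefficients `ξ` and shifts `s` form a *shift rule* for `H`: for every state and observable,
`∑ j, ξ j * f (θ + s j)` is the derivative of the expectation value `f` at every `θ`. The number of
terms is the cardinality of `ι`, and complex coefficients are allowed. -/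
def IsShiftRule (H : Matrix (Fin N) (Fin N) ℂ) (ξ : ι → ℂ) (s : ι → ℝ) : Prop :=
  ∀ (ψ : Fin N → ℂ) (M : Matrix (Fin N) (Fin N) ℂ), M.IsHermitian → ∀ θ : ℝ,
    HasDerivAt (expectationValue N H M ψ) (∑ j, ξ j * expectationValue N H M ψ (θ + s j)) θ

open scoped ComplexStarModule in
theorem IsShiftRule.hasDerivAt (h : IsShiftRule H ξ s) (ψ : Fin N → ℂ)
    (M : Matrix (Fin N) (Fin N) ℂ) (θ : ℝ) :
    HasDerivAt (expectationValue N H M ψ) (∑ j, ξ j * expectationValue N H M ψ (θ + s j)) θ := by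
  have hadd := (h ψ (ℜ M) (ℜ M).2 θ).add ((h ψ (ℑ M) (ℑ M).2 θ).const_smul I)
  rw [← expectationValue_smul, ← expectationValue_add, realPart_add_I_smul_imaginaryPart] at hadd
  refine hadd.congr_deriv ?_
  conv_rhs => rw [← realPart_add_I_smul_imaginaryPart M, expectationValue_add,
    expectationValue_smul]
  simp only [Pi.add_apply, Pi.smul_apply, smul_eq_mul, Finset.mul_sum, mul_add, mul_left_comm I,
    Finset.sum_add_distrib]

theorem IsShiftRule.sum_mul_cexp_eq (h : IsShiftRule H ξ s) (hH : H.IsHermitian) {ω : ℝ}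
    (hω : IsFrequency H ω) : ∑ j, ξ j * cexp (I * ω * s j) = I * ω := by
  obtain ⟨α, β, a, b, ha, hb, hα, hβ, rfl⟩ := hω
  obtain ⟨ψ, hψa, hψb⟩ : ∃ ψ : Fin N → ℂ, star ψ ⬝ᵥ a ≠ 0 ∧ star b ⬝ᵥ ψ ≠ 0 := by
    open scoped ComplexOrder in exact exists_star_dotProduct_ne_zero ha hb
  have hrule := h.hasDerivAt ψ (vecMulVec a (star b)) 0
  rw [funext (expectationValue_vecMulVec_star hH hα hβ ψ)] at hrule
  have hderiv := (((hasDerivAt_id (0 : ℝ)).ofReal_comp.const_mul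
    (I * (β - α : ℝ))).cexp).const_mul ((star ψ ⬝ᵥ a) * (star b ⬝ᵥ ψ))
  have heq := hrule.unique hderiv
  refine mul_left_cancel₀ (mul_ne_zero hψa hψb) ?_
  simpa [Finset.mul_sum, mul_left_comm, mul_assoc] using heq

theorem no_three_term_shift_rule_general {R : ℕ} (hH : H.IsHermitian) {lam : ℝ} (hlam : lam ≠ 0)
    (hfreq : ∀ m ≤ R, IsFrequency H (m * lam)) (hcard : Fintype.card ι < 2 * R) :
    ¬ ∃ (ξ : ι → ℂ) (s : ι → ℝ), IsShiftRule H ξ s := by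
  rintro ⟨ξ, s, hrule⟩
  have hshifted (n : ℕ) (hn : n ≤ 2 * R) : IsFrequency H ((n - R) * lam) := by
    rcases le_total R n with hRn | hnR
    · simpa [Nat.cast_sub hRn] using hfreq (n - R) (by lia)
    · simpa [Nat.cast_sub hnR, ← neg_mul] using (hfreq (R - n) (by lia)).neg
  have hmoments (n : ℕ) (hn : n ≤ Fintype.card ι + 1) :
      ∑ j, ξ j * cexp (-(I * R * lam * s j)) * cexp (I * lam * s j) ^ n = I * lam * (n - R) := by
    calc ∑ j, ξ j * cexp (-(I * R * lam * s j)) * cexp (I * lam * s j) ^ n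
        = ∑ j, ξ j * cexp (I * ((n - R) * lam : ℝ) * s j) := by
          refine Finset.sum_congr rfl fun j _ => ?_
          rw [mul_assoc, ← Complex.exp_nat_mul, ← Complex.exp_add]
          push_cast
          ring_nf
      _ = I * ((n - R) * lam : ℝ) := hrule.sum_mul_cexp_eq hH (hshifted n (by lia))
      _ = I * lam * (n - R) := by push_cast; ring
  simpa [hlam] using eq_zero_of_sum_mul_pow_eq hmoments

end ShiftRules

/-- Anselmetti et al.'s no-go conjecture: a Hermitian generator having `−λ`, `0`
and `λ` among its eigenvalues admits no three-term parameter-shift rule; hence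
the four-term shift rule is optimal. -/
theorem no_three_term_shift_rule (N : ℕ) (hN : 1 ≤ N)
    (lam : ℝ) (hlam : lam ≠ 0)
    (H : Matrix (Fin N) (Fin N) ℂ) (hH : H.IsHermitian)
    (hneg : ∃ u : Fin N → ℂ, u ≠ 0 ∧ H *ᵥ u = (-(lam : ℂ)) • u)
    (hzero : ∃ v : Fin N → ℂ, v ≠ 0 ∧ H *ᵥ v = (0 : ℂ) • v)
    (hpos : ∃ w : Fin N → ℂ, w ≠ 0 ∧ H *ᵥ w = ((lam : ℂ)) • w) :
    ¬ ∃ (ξ₁ ξ₂ ξ₃ s₁ s₂ s₃ : ℝ),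
      ∀ (ψ : Fin N → ℂ) (M : Matrix (Fin N) (Fin N) ℂ), M.IsHermitian →
        ∀ θ : ℝ,
          HasDerivAt (expectationValue N H M ψ)
            ((ξ₁ : ℂ) * expectationValue N H M ψ (θ + s₁) +
             (ξ₂ : ℂ) * expectationValue N H M ψ (θ + s₂) +
             (ξ₃ : ℂ) * expectationValue N H M ψ (θ + s₃)) θ := by
  rintro ⟨ξ₁, ξ₂, ξ₃, s₁, s₂, s₃, hrule⟩
  exact no_three_term_shift_rule_general (ι := Fin 3) (R := 2) hH hlam
    (isFrequency_natCast_mul_of_eigenvectors hneg hzero hpos) (by simp)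
    ⟨![ξ₁, ξ₂, ξ₃], ![s₁, s₂, s₃], fun ψ M hM θ => by
      simpa [Fin.sum_univ_three] using hrule ψ M hM θ⟩
end
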